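/- Let u be a semi-stable radial classical solution. Then for every continuously differentiable function η : (0,1) → ℝ with compact support in (0,1) one has (N−1) ∫₀¹ ( −ψ''(r)ψ(r) + ψ'(r)² ) |u'(r)|^p η(r)² ψ(r)^{N−1} dr ≤ (p−1) ∫₀¹ |u'(r)|^p ( (ψ η)'(r) )² ψ(r)^{N−1} dr, where (ψη)' denotes the derivative of the product r ↦ ψ(r)η(r). -/

import Mathlib

/-!
Write `v = u'`, `n = N - 1`, `φ = ψ η`, and test the semi-stability inequality with `ξ = v φ`.
Since `|v|^{p-2} v = -(-v)^{p-1}`, the equation says that the flux `(p-1) |v|^{p-2} v'` equals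
`-f(u) + n (ψ'/ψ) (-v)^{p-1}`, whose right-hand side is differentiable even though `v'` is only
known to be continuous. Differentiating it and substituting for `f'(u) v` gives the pointwise
identity
`((p-1) |v|^{p-2} ξ'² - f'(u) ξ²) ψ^n
  = F' + (p-1) |v|^p φ'² ψ^n - n (-ψ''ψ + ψ'²) |v|^p η² ψ^n`,
where `F = (-f(u) + n (ψ'/ψ) (-v)^{p-1}) ψ^n v φ²` has compact support in `(0,1)`
(`hasDerivAt_flux`, from the algebraic identity `flux_identity`).
Integrating, the term `F'` contributes nothing, and the claim follows. All functions that occur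
vanish off the support of `η`, so they are continuous on the whole line
(`continuous_of_zero_off_tsupport`) and all integrals are genuine.
-/

open MeasureTheory Set Filter

theorem eventually_notMem_tsupport {η : ℝ → ℝ} {r : ℝ} (hr : r ∉ tsupport η) :
    ∀ᶠ s in nhds r, s ∉ tsupport η :=
  (isClosed_tsupport η).isOpen_compl.mem_nhds hr

/-- A function continuous on `(0,1)` that vanishes off the support of `η`, itself inside
`(0,1)`, is continuous on the whole line. -/
theorem continuous_of_zero_off_tsupport {η g : ℝ → ℝ} (hη : tsupport η ⊆ Ioo (0:ℝ) 1)
    (hg : ContinuousOn g (Ioo (0:ℝ) 1)) (h0 : ∀ r, r ∉ tsupport η → g r = 0) :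
    Continuous g := by
  rw [continuous_iff_continuousAt]
  intro r
  by_cases hr : r ∈ tsupport η
  · exact hg.continuousAt (isOpen_Ioo.mem_nhds (hη hr))
  · have : g =ᶠ[nhds r] fun _ => (0:ℝ) := by
      filter_upwards [eventually_notMem_tsupport hr] with s hs using h0 s hs
    exact continuousAt_const.congr this.symm

/-- The left side is the product-rule expansion of `F'` at a point, `F` being the boundary term
of `hasDerivAt_flux`, with `(-v)^{p-1}` written as `A * -v`; the equation (`heq`) is used only
to eliminate `f(u)`. Here `A`, `B` stand
for `(-v)^{p-2}`, `ψ^{n-1}`; the variables `s, s1, s2` are `ψ, ψ', ψ''`; `e, e1` are `η, η'`;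
`V` is `v'`; and `c, c1` are `f(u), f'(u)`. -/
theorem flux_identity {p n A B s s1 s2 e e1 v V c c1 : ℝ} (hs : s ≠ 0)
    (heq : -(p - 1) * A * V - n * (s1 / s) * A * v = c) :
    (((-(c1 * v) - (n * ((s2 * s - s1 * s1) / s ^ 2) * (-(A * -v))
          + n * (s1 / s) * (-(-V * (p - 1) * A)))) * (B * s)
        + (-c - n * (s1 / s) * (-(A * -v))) * (s1 * n * B)) * v
        + (-c - n * (s1 / s) * (-(A * -v))) * (B * s) * V) * (s * e) ^ 2
      + (-c - n * (s1 / s) * (-(A * -v))) * (B * s) * v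
          * (2 * (s * e) * (s1 * e + s * e1))
    = ((p - 1) * A * (V * (s * e) + v * (s1 * e + s * e1)) ^ 2 - c1 * (v * (s * e)) ^ 2) * (B * s)
      - (p - 1) * ((A * v ^ 2) * (s1 * e + s * e1) ^ 2 * (B * s))
      + n * ((-s2 * s + s1 ^ 2) * (A * v ^ 2) * e ^ 2 * (B * s)) := by
  subst heq
  field_simp
  ring

/-- The derivative of the boundary term at a point `r` where the equation holds (with `v = u'`):
the stability integrand for `ξ = v ψ η`, minus `p - 1` times the integrand of the right side of
the claim, plus `n` times that of the left side. -/
theorem hasDerivAt_flux {p n : ℝ} {ψ f u η v : ℝ → ℝ} {r s1 s2 e1 V c1 : ℝ}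
    (hψr : 0 < ψ r) (hvr : v r < 0) (hψ1 : deriv ψ r = s1)
    (hψ : HasDerivAt ψ s1 r) (hψ2 : HasDerivAt (deriv ψ) s2 r)
    (hη : HasDerivAt η e1 r) (hv : HasDerivAt v V r) (hu : HasDerivAt u (v r) r)
    (hf : HasDerivAt f c1 (u r))
    (heq : -(p - 1) * |v r| ^ (p - 2) * V - n * (s1 / ψ r) * |v r| ^ (p - 2) * v r = f (u r)) :
    HasDerivAt
      (fun r => (-f (u r) - n * (deriv ψ r / ψ r) * (-(-v r) ^ (p - 1))) * ψ r ^ n * v r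
        * (ψ r * η r) ^ 2)
      (((p - 1) * |v r| ^ (p - 2) * (V * (ψ r * η r) + v r * (s1 * η r + ψ r * e1)) ^ 2
          - c1 * (v r * (ψ r * η r)) ^ 2) * ψ r ^ n
        - (p - 1) * (|v r| ^ p * (s1 * η r + ψ r * e1) ^ 2 * ψ r ^ n)
        + n * ((-s2 * ψ r + s1 ^ 2) * |v r| ^ p * η r ^ 2 * ψ r ^ n)) r := by
  have hx : 0 < -v r := by linarith
  have habs : |v r| = -v r := abs_of_neg hvr
  have e1' : (-v r) ^ (p - 1) = (-v r) ^ (p - 2) * -v r := by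
    rw [← Real.rpow_add_one hx.ne']; congr 1; ring
  have e2' : (-v r) ^ p = (-v r) ^ (p - 2) * (v r) ^ 2 := by
    have : (-v r) ^ p = (-v r) ^ (p - 1) * -v r := by
      rw [← Real.rpow_add_one hx.ne']; congr 1; ring
    rw [this, e1']; ring
  have e3' : ψ r ^ n = ψ r ^ (n - 1) * ψ r := by
    rw [← Real.rpow_add_one hψr.ne']; congr 1; ring
  rw [habs] at heq
  rw [habs, e2', e3']
  have hW := (hv.neg.rpow_const (p := p - 1) (Or.inl hx.ne')).neg
  have hb := hψ.rpow_const (p := n) (Or.inl hψr.ne')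
  have hg := (hψ2.div hψ hψr.ne').const_mul n
  have hfu := (hf.comp r hu).neg
  have key := (((hfu.sub (hg.mul hW)).mul hb).mul hv).mul ((hψ.mul hη).pow 2)
  refine key.congr_deriv ?_
  rw [← flux_identity hψr.ne' heq]
  have e4 : p - 1 - 1 = p - 2 := by ring
  simp only [Pi.mul_apply, Pi.neg_apply, Pi.sub_apply, Pi.div_apply, Pi.pow_apply,
    Function.comp_apply, hψ1, e1', e3', e4]
  push_cast
  ring

/-- For a semi-stable radial classical solution u and any C¹ test
function η with compact support in (0,1),
(N−1)∫₀¹ (−ψ''ψ + ψ'²)|u'|^p η² ψ^{N−1} ≤ (p−1)∫₀¹ |u'|^p ((ψη)')² ψ^{N−1}. -/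
theorem stability_with_psi_eta
    (N : ℕ) (hN : 2 ≤ N) (p : ℝ) (hp1 : 1 < p) (hpN : p ≤ N)
    (ψ : ℝ → ℝ) (hψ : ContDiffOn ℝ (⊤ : ℕ∞) ψ (Set.Ico 0 1))
    (hψ0 : ψ 0 = 0) (hψ'0 : deriv ψ 0 = 1) (hψ''0 : deriv (deriv ψ) 0 = 0)
    (hψpos : ∀ r ∈ Set.Ioo (0:ℝ) 1, 0 < ψ r)
    (f : ℝ → ℝ) (hf : ContDiff ℝ 1 f)
    (u : ℝ → ℝ) (hu : ContDiffOn ℝ 2 u (Set.Ioo 0 1))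
    (hu' : ∀ r ∈ Set.Ioo (0:ℝ) 1, deriv u r < 0)
    (heq : ∀ r ∈ Set.Ioo (0:ℝ) 1,
      -(p - 1) * |deriv u r| ^ (p - 2) * deriv (deriv u) r
        - ((N : ℝ) - 1) * (deriv ψ r / ψ r) * |deriv u r| ^ (p - 2) * deriv u r
        = f (u r))
    (hstab : ∀ ξ : ℝ → ℝ, ContDiff ℝ 1 ξ → tsupport ξ ⊆ Set.Ioo (0:ℝ) 1 →
      0 ≤ ∫ r in (0:ℝ)..1,
        ((p - 1) * |deriv u r| ^ (p - 2) * (deriv ξ r) ^ 2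
          - deriv f (u r) * ξ r ^ 2) * ψ r ^ ((N : ℝ) - 1)) :
    ∀ η : ℝ → ℝ, ContDiff ℝ 1 η → tsupport η ⊆ Set.Ioo (0:ℝ) 1 →
      ((N : ℝ) - 1) * ∫ r in (0:ℝ)..1,
          (-(deriv (deriv ψ) r) * ψ r + (deriv ψ r) ^ 2) * |deriv u r| ^ p
            * η r ^ 2 * ψ r ^ ((N : ℝ) - 1)
        ≤ (p - 1) * ∫ r in (0:ℝ)..1,
            |deriv u r| ^ p * (deriv (fun s => ψ s * η s) r) ^ 2
              * ψ r ^ ((N : ℝ) - 1) := by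
  intro η hη hηs
  set n : ℝ := (N : ℝ) - 1 with hn
  have hI : ∀ r ∈ Ioo (0:ℝ) 1, Ioo (0:ℝ) 1 ∈ nhds r := fun r hr => isOpen_Ioo.mem_nhds hr
  have hψI : ContDiffOn ℝ (⊤ : ℕ∞) ψ (Ioo 0 1) := hψ.mono Ioo_subset_Ico_self
  have hψ1 : ContDiffOn ℝ (⊤ : ℕ∞) (deriv ψ) (Ioo 0 1) :=
    hψI.deriv_of_isOpen isOpen_Ioo (by simp)
  have hψ2 : ContDiffOn ℝ (⊤ : ℕ∞) (deriv (deriv ψ)) (Ioo 0 1) :=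
    hψ1.deriv_of_isOpen isOpen_Ioo (by simp)
  have hv : ContDiffOn ℝ 1 (deriv u) (Ioo 0 1) :=
    hu.deriv_of_isOpen isOpen_Ioo (by norm_num)
  have dψ : ∀ r ∈ Ioo (0:ℝ) 1, HasDerivAt ψ (deriv ψ r) r := fun r hr =>
    ((hψI.differentiableOn (by simp)).differentiableAt (hI r hr)).hasDerivAt
  have dψ1 : ∀ r ∈ Ioo (0:ℝ) 1, HasDerivAt (deriv ψ) (deriv (deriv ψ) r) r := fun r hr =>
    ((hψ1.differentiableOn (by simp)).differentiableAt (hI r hr)).hasDerivAt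
  have du : ∀ r ∈ Ioo (0:ℝ) 1, HasDerivAt u (deriv u r) r := fun r hr =>
    ((hu.differentiableOn (by norm_num)).differentiableAt (hI r hr)).hasDerivAt
  have dv : ∀ r ∈ Ioo (0:ℝ) 1, HasDerivAt (deriv u) (deriv (deriv u) r) r := fun r hr =>
    ((hv.differentiableOn (by norm_num)).differentiableAt (hI r hr)).hasDerivAt
  have dη : ∀ r, HasDerivAt η (deriv η r) r := fun r =>
    ((hη.differentiable (by norm_num)) r).hasDerivAt
  have η0 : ∀ r, r ∉ tsupport η → η r = 0 := fun r hr => image_eq_zero_of_notMem_tsupport hr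
  have zero_near : ∀ g : ℝ → ℝ, (∀ r, r ∉ tsupport η → g r = 0) → ∀ r, r ∉ tsupport η →
      g =ᶠ[nhds r] fun _ => (0:ℝ) := fun g hg r hr => by
    filter_upwards [eventually_notMem_tsupport hr] with s hs using hg s hs
  have deriv_zero : ∀ g : ℝ → ℝ, (∀ r, r ∉ tsupport η → g r = 0) → ∀ r, r ∉ tsupport η →
      deriv g r = 0 := fun g hg r hr => by
    rw [(zero_near g hg r hr).deriv_eq]; simp
  set φ : ℝ → ℝ := fun s => ψ s * η s with hφ
  set ξ : ℝ → ℝ := fun s => deriv u s * φ s with hξ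
  have φ0 : ∀ r, r ∉ tsupport η → φ r = 0 := fun r hr => by simp [hφ, η0 r hr]
  have ξ0 : ∀ r, r ∉ tsupport η → ξ r = 0 := fun r hr => by simp [hξ, φ0 r hr]
  have hφI : ContDiffOn ℝ 1 φ (Ioo 0 1) :=
    (hψI.of_le (by exact_mod_cast le_top)).mul hη.contDiffOn
  have hξI : ContDiffOn ℝ 1 ξ (Ioo 0 1) := hv.mul hφI
  have hξC : ContDiff ℝ 1 ξ := by
    rw [contDiff_iff_contDiffAt]
    intro r
    by_cases hr : r ∈ tsupport η
    · exact hξI.contDiffAt (hI r (hηs hr))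
    · exact contDiffAt_const.congr_of_eventuallyEq (zero_near ξ ξ0 r hr)
  have hξs : tsupport ξ ⊆ Ioo (0:ℝ) 1 := by
    refine (closure_minimal ?_ (isClosed_tsupport η)).trans hηs
    intro r hr
    by_contra h
    exact hr (ξ0 r h)
  have dφ : ∀ r ∈ Ioo (0:ℝ) 1, HasDerivAt φ (deriv ψ r * η r + ψ r * deriv η r) r :=
    fun r hr => (dψ r hr).mul (dη r)
  have dξ : ∀ r ∈ Ioo (0:ℝ) 1, HasDerivAt ξ
      (deriv (deriv u) r * φ r + deriv u r * (deriv ψ r * η r + ψ r * deriv η r)) r :=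
    fun r hr => (dv r hr).mul (dφ r hr)
  -- The semi-stability integrand `S` and the two integrands `T1`, `T2` of the claim.
  have H := hstab ξ hξC hξs
  set S : ℝ → ℝ := fun r => ((p - 1) * |deriv u r| ^ (p - 2) * (deriv ξ r) ^ 2
          - deriv f (u r) * ξ r ^ 2) * ψ r ^ n with hS
  set T1 : ℝ → ℝ := fun r => |deriv u r| ^ p * (deriv φ r) ^ 2 * ψ r ^ n with hT1
  set T2 : ℝ → ℝ := fun r => (-(deriv (deriv ψ) r) * ψ r + (deriv ψ r) ^ 2) * |deriv u r| ^ p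
            * η r ^ 2 * ψ r ^ n with hT2
  have S0 : ∀ r, r ∉ tsupport η → S r = 0 := fun r hr => by
    simp [hS, ξ0 r hr, deriv_zero ξ ξ0 r hr]
  have T10 : ∀ r, r ∉ tsupport η → T1 r = 0 := fun r hr => by
    simp [hT1, deriv_zero φ φ0 r hr]
  have T20 : ∀ r, r ∉ tsupport η → T2 r = 0 := fun r hr => by
    simp [hT2, η0 r hr]
  have cψ := hψI.continuousOn
  have cv := hv.continuousOn
  have cφ' : ContinuousOn (deriv φ) (Ioo 0 1) :=
    hφI.continuousOn_deriv_of_isOpen isOpen_Ioo (by norm_num)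
  have cξ' : ContinuousOn (deriv ξ) (Ioo 0 1) :=
    hξI.continuousOn_deriv_of_isOpen isOpen_Ioo (by norm_num)
  have cpow : ∀ q : ℝ, ContinuousOn (fun r => |deriv u r| ^ q) (Ioo 0 1) := fun q =>
    cv.abs.rpow_const fun r hr => Or.inl (abs_pos.2 (hu' r hr).ne).ne'
  have cb : ContinuousOn (fun r => ψ r ^ n) (Ioo 0 1) :=
    cψ.rpow_const fun r hr => Or.inl (hψpos r hr).ne'
  have cf : ContinuousOn (fun r => deriv f (u r)) (Ioo 0 1) :=
    (hf.continuous_deriv (by norm_num)).comp_continuousOn hu.continuousOn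
  have cS : Continuous S := continuous_of_zero_off_tsupport hηs
    ((((continuousOn_const.mul (cpow _)).mul (cξ'.pow 2)).sub
      (cf.mul (hξI.continuousOn.pow 2))).mul cb) S0
  have cT1 : Continuous T1 := continuous_of_zero_off_tsupport hηs
    (((cpow _).mul (cφ'.pow 2)).mul cb) T10
  have cT2 : Continuous T2 := continuous_of_zero_off_tsupport hηs
    ((((((hψ2.continuousOn.neg).mul cψ).add (hψ1.continuousOn.pow 2)).mul (cpow _)).mul
      (hη.continuous.continuousOn.pow 2)).mul cb) T20
  set F : ℝ → ℝ := fun r =>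
    (-f (u r) - n * (deriv ψ r / ψ r) * (-(-deriv u r) ^ (p - 1))) * ψ r ^ n * deriv u r
        * (ψ r * η r) ^ 2 with hF
  have F0 : ∀ r, r ∉ tsupport η → F r = 0 := fun r hr => by simp [hF, η0 r hr]
  have dF : ∀ r, HasDerivAt F (S r - (p - 1) * T1 r + n * T2 r) r := by
    intro r
    by_cases hr : r ∈ tsupport η
    · have hr' := hηs hr
      have := hasDerivAt_flux (p := p) (n := n) (hψpos r hr') (hu' r hr') rfl (dψ r hr')
        (dψ1 r hr') (dη r) (dv r hr') (du r hr')
        ((hf.differentiable (by norm_num)) (u r)).hasDerivAt (heq r hr')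
      refine this.congr_deriv ?_
      simp only [hS, hT1, hT2, (dξ r hr').deriv, (dφ r hr').deriv]
      simp only [hξ, hφ]
    · rw [S0 r hr, T10 r hr, T20 r hr]
      have h := (hasDerivAt_const r (0:ℝ)).congr_of_eventuallyEq (zero_near F F0 r hr)
      simpa using h
  have iS := cS.intervalIntegrable (μ := volume) 0 1
  have iT1 := cT1.intervalIntegrable (μ := volume) 0 1 |>.const_mul (p - 1)
  have iT2 := cT2.intervalIntegrable (μ := volume) 0 1 |>.const_mul n
  -- `F` vanishes at both ends, so `∫ S - (p - 1) ∫ T1 + n ∫ T2 = 0`.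
  have hint := intervalIntegral.integral_eq_sub_of_hasDerivAt (a := 0) (b := 1)
    (fun r _ => dF r) ((iS.sub iT1).add iT2)
  rw [F0 1 fun h => absurd (hηs h).2 (lt_irrefl _), F0 0 fun h => absurd (hηs h).1 (lt_irrefl _),
    intervalIntegral.integral_add (iS.sub iT1) iT2, intervalIntegral.integral_sub iS iT1,
    intervalIntegral.integral_const_mul, intervalIntegral.integral_const_mul] at hint
  linarith
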